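/- Let G ∈ G_{n,n+k} with n ≥ 1 and k ≥ 1. (a) G has a cubic weak distillation if and only if G has no vertex of degree 1. (b) G has a bridgeless cubic weak distillation if and only if G is bridgeless. -/

import Mathlib

open Classical Finset

noncomputable section

/-- A finite multigraph: edges carry two (possibly equal) endpoints. -/
structure Multigraph where
  V : Type
  E : Type
  [fintV : Fintype V]
  [fintE : Fintype E]
  src : E → V
  tgt : E → V

attribute [instance] Multigraph.fintV Multigraph.fintE

namespace Multigraph

variable (G : Multigraph)

/-- Number of vertices. -/
def nV : ℕ := Fintype.card G.V

/-- Number of edges (with multiplicity). -/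
def nE : ℕ := Fintype.card G.E

/-- One step along an edge belonging to the edge set `S`. -/
def stepOn (S : Finset G.E) (u v : G.V) : Prop :=
  ∃ e ∈ S, (G.src e = u ∧ G.tgt e = v) ∨ (G.src e = v ∧ G.tgt e = u)

/-- The spanning subgraph with edge set `S` is connected. -/
def ConnOn (S : Finset G.E) : Prop :=
  ∀ u v : G.V, Relation.ReflTransGen (G.stepOn S) u v

/-- `G` is connected. -/
def Connected : Prop := G.ConnOn Finset.univ

/-- The edge set `F` disconnects `G` (i.e. is a disconnection). -/
def Disconnects (F : Finset G.E) : Prop := ¬ G.ConnOn (Finset.univ \ F)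

/-- `d i G`: the number of `i`-disconnections of `G`. -/
def d (i : ℕ) : ℕ :=
  ((Finset.univ : Finset (Finset G.E)).filter fun F => F.card = i ∧ G.Disconnects F).card

/-- The all-terminal reliability `R(G,p)`: each edge is independently retained with
probability `p`; this is the probability that the retained spanning subgraph is connected. -/
def rel (p : ℝ) : ℝ :=
  ∑ S : Finset G.E, if G.ConnOn S then p ^ S.card * (1 - p) ^ (G.nE - S.card) else 0

/-- `e` is a bridge. -/
def IsBridge (e : G.E) : Prop := G.Disconnects {e}

def Bridgeless : Prop := ∀ e : G.E, ¬ G.IsBridge e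

/-- The number of spanning trees of `G` (connected spanning subgraphs with `nV - 1` edges). -/
def treeCount : ℕ :=
  ((Finset.univ : Finset (Finset G.E)).filter fun S => S.card + 1 = G.nV ∧ G.ConnOn S).card

/-- The edge-connectivity: the least size of a disconnecting set of edges. -/
def edgeConnectivity : ℕ :=
  sInf {i : ℕ | ∃ F : Finset G.E, F.card = i ∧ G.Disconnects F}

/-- Degree of a vertex (a loop counts twice). -/
def deg (v : G.V) : ℕ :=
  (Finset.univ.filter fun e => G.src e = v).card +
    (Finset.univ.filter fun e => G.tgt e = v).card

/-- The edges crossing the vertex set `A`. -/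
def cutEdges (A : Finset G.V) : Finset G.E :=
  Finset.univ.filter fun e =>
    (G.src e ∈ A ∧ G.tgt e ∉ A) ∨ (G.src e ∉ A ∧ G.tgt e ∈ A)

/-- `F` is a cut: the set of edges crossing a nontrivial bipartition of the vertices. -/
def IsCut (F : Finset G.E) : Prop :=
  ∃ A : Finset G.V, A.Nonempty ∧ A ≠ Finset.univ ∧ F = G.cutEdges A

/-- `F` is a bond: a minimal cut. -/
def IsBond (F : Finset G.E) : Prop :=
  G.IsCut F ∧ ∀ F' ⊆ F, G.IsCut F' → F' = F

/-- Number of `s`-bonds of `G`. -/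
def bondCount (s : ℕ) : ℕ :=
  ((Finset.univ : Finset (Finset G.E)).filter fun F => F.card = s ∧ G.IsBond F).card

/-- Adjacency of vertices. -/
def Adj (u v : G.V) : Prop :=
  ∃ e : G.E, (G.src e = u ∧ G.tgt e = v) ∨ (G.src e = v ∧ G.tgt e = u)

/-- `G` is simple: no loops and no parallel edges. -/
def IsSimple : Prop :=
  (∀ e : G.E, G.src e ≠ G.tgt e) ∧
    ∀ e f : G.E,
      ((G.src e = G.src f ∧ G.tgt e = G.tgt f) ∨ (G.src e = G.tgt f ∧ G.tgt e = G.src f)) →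
        e = f

end Multigraph

/-- `G ∈ 𝒢_{n,m}`: connected with `n` vertices and `m` edges. -/
def memG (G : Multigraph) (n m : ℕ) : Prop :=
  G.nV = n ∧ G.nE = m ∧ G.Connected

/-- Isomorphism of multigraphs. -/
structure MGIso (G H : Multigraph) where
  vMap : G.V ≃ H.V
  eMap : G.E ≃ H.E
  ends_eq : ∀ e : G.E,
    (H.src (eMap e) = vMap (G.src e) ∧ H.tgt (eMap e) = vMap (G.tgt e)) ∨
    (H.src (eMap e) = vMap (G.tgt e) ∧ H.tgt (eMap e) = vMap (G.src e))

def IsIso (G H : Multigraph) : Prop := Nonempty (MGIso G H)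

/-- `G` is `p`-optimal in `𝒢_{n,m}`. -/
def pOptimal (G : Multigraph) (n m : ℕ) (p : ℝ) : Prop :=
  memG G n m ∧ ∀ H : Multigraph, memG H n m → H.rel p ≤ G.rel p

/-- `G` is uniquely optimal in `𝒢_{n,m}`: strictly more reliable than every
non-isomorphic member, for every `p ∈ (0,1)`. -/
def UniquelyOptimal (G : Multigraph) (n m : ℕ) : Prop :=
  memG G n m ∧ ∀ H : Multigraph, memG H n m → ¬ IsIso G H →
    ∀ p : ℝ, 0 < p → p < 1 → H.rel p < G.rel p

noncomputable instance quotFintype {α : Type} [Fintype α] {r : α → α → Prop} :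
    Fintype (Quot r) :=
  letI := Classical.decEq (Quot r)
  Fintype.ofSurjective (Quot.mk r) fun q => Quot.exists_rep q

/-- Identification of the endpoints of zero-weight edges. -/
def zeroRel (D : Multigraph) (w : D.E → ℕ) : D.V → D.V → Prop :=
  fun u v => ∃ e : D.E, w e = 0 ∧ D.src e = u ∧ D.tgt e = v

/-- The `j`-th node along the chain replacing the edge `e` (whose chain has `w e` edges). -/
def chainNode (D : Multigraph) (w : D.E → ℕ) (e : D.E) (j : ℕ) :
    Quot (zeroRel D w) ⊕ (Σ f : D.E, Fin (w f - 1)) :=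
  if h : 0 < j ∧ j < w e then Sum.inr ⟨e, ⟨j - 1, by omega⟩⟩
  else if j = 0 then Sum.inl (Quot.mk _ (D.src e))
  else Sum.inl (Quot.mk _ (D.tgt e))

/-- The weak subdivision of `D` determined by the chain lengths `w`: each edge `e` is
replaced by a chain with `w e` edges; zero-weight edges are contracted. -/
def subdivide (D : Multigraph) (w : D.E → ℕ) : Multigraph where
  V := Quot (zeroRel D w) ⊕ (Σ f : D.E, Fin (w f - 1))
  E := Σ f : D.E, Fin (w f)
  src f := chainNode D w f.1 f.2.val
  tgt f := chainNode D w f.1 (f.2.val + 1)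

/-- The zero-weight edges contain no cycle (no "zero cycle"): they form a forest. -/
def ZeroAcyclic (D : Multigraph) (w : D.E → ℕ) : Prop :=
  Fintype.card (Quot (zeroRel D w)) +
      (Finset.univ.filter fun e : D.E => w e = 0).card = Fintype.card D.V

/-- `G` is a weak subdivision of `D` with chain lengths `w`. -/
def IsWeakSubdivision (G D : Multigraph) (w : D.E → ℕ) : Prop :=
  ZeroAcyclic D w ∧ IsIso G (subdivide D w)

/-- `D` is a weak distillation of `G`. -/
def IsWeakDistillation (D G : Multigraph) : Prop :=
  ∃ w : D.E → ℕ, IsWeakSubdivision G D w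

/-- The chain lengths differ pairwise by at most one. -/
def BalancedWeights {E : Type} (w : E → ℕ) : Prop := ∀ e f : E, w e ≤ w f + 1

/-- `D ∈ 𝒟_k`: connected, cubic, 3-edge-connected, of exceedance `k`. -/
def memDk (k : ℕ) (D : Multigraph) : Prop :=
  D.Connected ∧ (∀ v : D.V, D.deg v = 3) ∧
    (∀ F : Finset D.E, D.Disconnects F → 3 ≤ F.card) ∧ D.nE = D.nV + k

/-- Identification of the two endpoints of the edge `e`. -/
def contractRel (G : Multigraph) (e : G.E) : G.V → G.V → Prop :=
  fun u v => u = G.src e ∧ v = G.tgt e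

/-- Contraction of the edge `e`. -/
def Multigraph.contract (G : Multigraph) (e : G.E) : Multigraph :=
  letI := Classical.decEq G.E
  { V := Quot (contractRel G e)
    E := {f : G.E // f ≠ e}
    src := fun f => Quot.mk _ (G.src f.1)
    tgt := fun f => Quot.mk _ (G.tgt f.1) }

/-- `G'` is obtained from `G` by shifting an edge: in an intermediate graph `H`
(the expansion of `G` at a vertex by the new edge `e'`), the edges `e, e'` form a
2-bond; contracting `e'` gives back `G`, while contracting `e` gives `G'`. -/
def IsShiftOf (G G' : Multigraph) : Prop :=
  ∃ (H : Multigraph) (e e' : H.E), e ≠ e' ∧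
    H.src e ≠ H.tgt e ∧ H.src e' ≠ H.tgt e' ∧
    H.IsBond {e, e'} ∧
    IsIso (H.contract e') G ∧ IsIso (H.contract e) G'

/-- Equivalence of graphs: repeated edge shifting. -/
def EquivalentGraphs (G G' : Multigraph) : Prop :=
  Relation.ReflTransGen IsShiftOf G G'

/-- `G'` is obtained from `G` by moving the (non-loop) edge `e`: contracting `e` and
expanding a new edge, identified with `e` via `φ`, at an arbitrary vertex.
Equivalently, `G/e` and `G'/φ e` agree, compatibly with the edge identification `φ`. -/
def MovedEdge (G G' : Multigraph) (φ : G.E ≃ G'.E) (e : G.E) : Prop :=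
  G.src e ≠ G.tgt e ∧ G'.src (φ e) ≠ G'.tgt (φ e) ∧
  ∃ ψ : Quot (contractRel G e) ≃ Quot (contractRel G' (φ e)),
    ∀ f : G.E, f ≠ e →
      ((ψ (Quot.mk _ (G.src f)) = Quot.mk _ (G'.src (φ f)) ∧
        ψ (Quot.mk _ (G.tgt f)) = Quot.mk _ (G'.tgt (φ f))) ∨
       (ψ (Quot.mk _ (G.src f)) = Quot.mk _ (G'.tgt (φ f)) ∧
        ψ (Quot.mk _ (G.tgt f)) = Quot.mk _ (G'.src (φ f))))

/-- Move one edge from the chain `a` to the chain `b`. -/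
def moveWeight {E : Type} (w : E → ℕ) (a b : E) : E → ℕ :=
  fun g => if g = b then w b + 1 else if g = a then w a - 1 else w g

/-- The chains of maximal length. -/
def maxChains (D : Multigraph) (w : D.E → ℕ) : Finset D.E :=
  Finset.univ.filter fun e => ∀ f : D.E, w f ≤ w e

/-- The chains of minimal length. -/
def minChains (D : Multigraph) (w : D.E → ℕ) : Finset D.E :=
  Finset.univ.filter fun e => ∀ f : D.E, w e ≤ w f

/-- Degree of `v` within the edge set `S`. -/
def degIn (D : Multigraph) (S : Finset D.E) (v : D.V) : ℕ :=
  (S.filter fun e => D.src e = v).card + (S.filter fun e => D.tgt e = v).card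

/-- `S` is a matching (pairwise non-adjacent edges). -/
def IsMatchingIn (D : Multigraph) (S : Finset D.E) : Prop := ∀ v : D.V, degIn D S v ≤ 1

/-- `S` is a path with three edges. -/
def IsPath3In (D : Multigraph) (S : Finset D.E) : Prop :=
  S.card = 3 ∧ (∀ v : D.V, degIn D S v ≤ 2) ∧
    (Finset.univ.filter fun v : D.V => degIn D S v = 1).card = 2

/-- `S` is the disjoint union of a path with three edges and a single edge. -/
def IsPath3PlusEdgeIn (D : Multigraph) (S : Finset D.E) : Prop :=
  S.card = 4 ∧ (∀ v : D.V, degIn D S v ≤ 2) ∧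
    (Finset.univ.filter fun v : D.V => degIn D S v = 1).card = 4 ∧
    ∃ e ∈ S, degIn D S (D.src e) = 2 ∧ degIn D S (D.tgt e) = 2

/-- `S` is the disjoint union of two paths with two edges each. -/
def IsTwoPlusTwoIn (D : Multigraph) (S : Finset D.E) : Prop :=
  S.card = 4 ∧ (∀ v : D.V, degIn D S v ≤ 2) ∧
    (Finset.univ.filter fun v : D.V => degIn D S v = 1).card = 4 ∧
    ∀ e ∈ S, degIn D S (D.src e) = 1 ∨ degIn D S (D.tgt e) = 1

/-- Two edges sharing a vertex. -/
def AdjEdges (D : Multigraph) (a b : D.E) : Prop :=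
  ∃ v : D.V, (D.src a = v ∨ D.tgt a = v) ∧ (D.src b = v ∨ D.tgt b = v)

/-- The number of incidences of edges of weight `c` at the vertex `u`. -/
def incCount (D : Multigraph) (w : D.E → ℕ) (u : D.V) (c : ℕ) : ℕ :=
  (Finset.univ.filter fun e : D.E => D.src e = u ∧ w e = c).card +
    (Finset.univ.filter fun e : D.E => D.tgt e = u ∧ w e = c).card

/-- The `π^v`-value of the vertex `u`: the number of incident edges of weight `q + 1`
minus the number of incident edges of weight `q - 1`. -/
def piV (D : Multigraph) (w : D.E → ℕ) (q : ℕ) (u : D.V) : ℤ :=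
  (incCount D w u (q + 1) : ℤ) -
    (if q = 0 then 0 else (incCount D w u (q - 1) : ℤ))

/-- The `π^v`-values are balanced: pairwise differences at most one. -/
def BalancedPiV (D : Multigraph) (w : D.E → ℕ) (q : ℕ) : Prop :=
  ∀ u v : D.V, piV D w q u ≤ piV D w q v + 1

/-- The standard weight `q`, where `m = 3kq + r` with `-3k/2 < r ≤ 3k/2`. -/
def stdWeight (m k : ℕ) : ℕ := (2 * m + 3 * k - 1) / (6 * k)

/-- `w` is a balanced weighting of `D` of total size `m` (the implied weak
subdivision is the generic member of `ℬ_m(D)`). -/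
def IsBalancedWeighting (D : Multigraph) (w : D.E → ℕ) (m : ℕ) : Prop :=
  (∑ e : D.E, w e) = m ∧ BalancedWeights w ∧ ZeroAcyclic D w

/-- Every 3-bond of `D` is trivial (consists of the three edges at a single vertex). -/
def OnlyTrivialThreeBonds (D : Multigraph) : Prop :=
  ∀ F : Finset D.E, D.IsBond F → F.card = 3 →
    ∃ u : D.V, F = Finset.univ.filter fun e => D.src e = u ∨ D.tgt e = u

/-- The 3-dipole: two vertices joined by three parallel edges. -/
def dipole3 : Multigraph where
  V := Fin 2
  E := Fin 3
  src _ := 0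
  tgt _ := 1

/-- The complete graph `K₄`. -/
def K4 : Multigraph where
  V := Fin 4
  E := {p : Fin 4 × Fin 4 // p.1 < p.2}
  src p := p.1.1
  tgt p := p.1.2

/-- The complete bipartite graph `K_{3,3}`. -/
def K33 : Multigraph where
  V := Fin 3 ⊕ Fin 3
  E := Fin 3 × Fin 3
  src p := Sum.inl p.1
  tgt p := Sum.inr p.2

/-- The triangular prism `Π₃`; the edges `Sum.inr i` are the rungs. -/
def prism : Multigraph where
  V := Fin 3 × Bool
  E := (Fin 3 × Bool) ⊕ Fin 3
  src := fun e => match e with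
    | Sum.inl (i, b) => (i, b)
    | Sum.inr i => (i, false)
  tgt := fun e => match e with
    | Sum.inl (i, b) => (i + 1, b)
    | Sum.inr i => (i, true)

/-- The Wagner graph (the 4-Möbius ladder): the edges `Sum.inl i` are the rails
(the 8-cycle) and the edges `Sum.inr j` are the rungs. -/
def wagner : Multigraph where
  V := Fin 8
  E := Fin 8 ⊕ Fin 4
  src := fun e => match e with
    | Sum.inl i => i
    | Sum.inr j => ⟨j.val, by omega⟩
  tgt := fun e => match e with
    | Sum.inl i => i + 1
    | Sum.inr j => ⟨j.val + 4, by omega⟩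

/-- The Petersen graph. -/
def petersen : Multigraph where
  V := Fin 5 × Bool
  E := Fin 5 ⊕ Fin 5 ⊕ Fin 5
  src := fun e => match e with
    | Sum.inl i => (i, false)
    | Sum.inr (Sum.inl i) => (i, false)
    | Sum.inr (Sum.inr i) => (i, true)
  tgt := fun e => match e with
    | Sum.inl i => (i + 1, false)
    | Sum.inr (Sum.inl i) => (i, true)
    | Sum.inr (Sum.inr i) => (i + 2, true)

/-!
A weak subdivision inherits bridgelessness from its distillation. It also inherits minimum degree at
least two: contracting the zero-length chains glues `t` vertices along a tree, which uses up at
most `2 (t - 1)` of their at least `2 t` half-edges. This gives the forward implications.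

Conversely, suppressing the degree-two vertices of a multigraph with more edges than vertices and no
vertex of degree one leads to minimum degree at least three, and repeatedly moving two half-edges of
a vertex of degree at least four to a new neighbour then leads to a cubic multigraph. In the
bridgeless case the new edge must not be a bridge. Among three half-edges `a`, `b`, `c` at the
vertex, either the pair `a`, `b` or the pair `a`, `c` is suitable: if both new edges were bridges,
the two cuts would intersect in a cut separating off the edge of `a` alone.
-/

namespace Multigraph

section Connectivity

variable {G H : Multigraph} {S T : Finset G.E} {u v x : G.V} {e : G.E}

/-- `G.Reach S u v`: the vertices `u` and `v` are joined by a walk whose edges belong to `S`, so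
that `G.ConnOn S` says that `G.Reach S` relates all pairs of vertices. -/
def Reach (G : Multigraph) (S : Finset G.E) : G.V → G.V → Prop :=
  Relation.ReflTransGen (G.stepOn S)

lemma Reach.refl (S : Finset G.E) (v : G.V) : G.Reach S v v :=
  Relation.ReflTransGen.refl

lemma Reach.trans (huv : G.Reach S u v) (hvx : G.Reach S v x) : G.Reach S u x :=
  Relation.ReflTransGen.trans huv hvx

lemma Reach.symm (h : G.Reach S u v) : G.Reach S v u :=
  have : Std.Symm (G.stepOn S) := ⟨fun _ _ ⟨e, he, hends⟩ => ⟨e, he, hends.symm⟩⟩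
  Relation.ReflTransGen.stdSymm.symm _ _ h

lemma reach_src_tgt (he : e ∈ S) : G.Reach S (G.src e) (G.tgt e) :=
  .single ⟨e, he, .inl ⟨rfl, rfl⟩⟩

lemma Reach.map {T : Finset H.E} (φ : G.V → H.V)
    (hφ : ∀ e ∈ S, H.Reach T (φ (G.src e)) (φ (G.tgt e))) (h : G.Reach S u v) :
    H.Reach T (φ u) (φ v) := by
  induction h with
  | refl => exact .refl T _
  | tail _ hstep ih =>
    obtain ⟨e, he, ⟨rfl, rfl⟩ | ⟨rfl, rfl⟩⟩ := hstep
    · exact ih.trans (hφ e he)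
    · exact ih.trans (hφ e he).symm

lemma Reach.mem_iff {A : Set G.V} (hA : ∀ e ∈ S, G.src e ∈ A ↔ G.tgt e ∈ A)
    (h : G.Reach S u v) : u ∈ A ↔ v ∈ A := by
  induction h with
  | refl => rfl
  | tail _ hstep ih =>
    obtain ⟨e, he, ⟨rfl, rfl⟩ | ⟨rfl, rfl⟩⟩ := hstep
    · exact ih.trans (hA e he)
    · exact ih.trans (hA e he).symm

lemma ConnOn.of_map (hG : G.ConnOn S) {T : Finset H.E} (φ : G.V → H.V)
    (hedge : ∀ e ∈ S, H.Reach T (φ (G.src e)) (φ (G.tgt e)))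
    (hsurj : ∀ y, ∃ x, H.Reach T (φ x) y) : H.ConnOn T := by
  intro y z
  obtain ⟨a, ha⟩ := hsurj y
  obtain ⟨b, hb⟩ := hsurj z
  exact ha.symm.trans ((Reach.map φ hedge (hG a b)).trans hb)

lemma ConnOn.mono (hST : S ⊆ T) (h : G.ConnOn S) : G.ConnOn T :=
  fun u v => Reach.map id (fun _ he => reach_src_tgt (hST he)) (h u v)

lemma mem_univ_sdiff_singleton {f : G.E} : f ∈ univ \ {e} ↔ f ≠ e := by
  simp

lemma bridgeless_iff : G.Bridgeless ↔ ∀ e, G.ConnOn (univ \ {e}) := by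
  simp only [Bridgeless, IsBridge, Disconnects, not_not]

lemma Bridgeless.connected (h : G.Bridgeless) (e : G.E) : G.Connected :=
  (bridgeless_iff.1 h e).mono (subset_univ _)

lemma isBridge_of_cut {A : Set G.V} (hA : ∀ f ≠ e, G.src f ∈ A ↔ G.tgt f ∈ A)
    (hu : u ∈ A) (hv : v ∉ A) : G.IsBridge e :=
  fun h => hv ((Reach.mem_iff (fun f hf => hA f (mem_univ_sdiff_singleton.1 hf)) (h u v)).1 hu)

lemma Connected.exists_cut_of_isBridge (hG : G.Connected) (he : G.IsBridge e) :
    ∃ A : Set G.V, (∀ f ≠ e, G.src f ∈ A ↔ G.tgt f ∈ A) ∧ G.src e ∈ A ∧ G.tgt e ∉ A := by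
  refine ⟨{x | G.Reach (univ \ {e}) (G.src e) x}, fun f hf => ?_, .refl _ _, fun htgt => he ?_⟩
  · have hreach := reach_src_tgt (mem_univ_sdiff_singleton.2 hf)
    exact ⟨fun h => h.trans hreach, fun h => h.trans hreach.symm⟩
  · refine ConnOn.of_map hG id (fun f _ => ?_) fun y => ⟨y, .refl _ _⟩
    by_cases hf : f = e
    · exact hf ▸ htgt
    · exact reach_src_tgt (mem_univ_sdiff_singleton.2 hf)

end Connectivity

section HalfEdge

variable (G : Multigraph)

/-- The half-edges of `G`: `(e, false)` is the half of `e` at `G.src e` and `(e, true)` the half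
at `G.tgt e`. A loop has two half-edges at its vertex. -/
abbrev HalfEdge : Type := G.E × Bool

variable {G} in
/-- The vertex at which a half-edge is attached. -/
def endpoint (h : G.HalfEdge) : G.V := cond h.2 (G.tgt h.1) (G.src h.1)

lemma card_filter_halfEdge (p : G.HalfEdge → Prop) [DecidablePred p] :
    #{h | p h} = #{e | p (e, false)} + #{e | p (e, true)} := by
  simp only [card_filter, Fintype.sum_prod_type, Fintype.sum_bool, sum_add_distrib]
  exact add_comm _ _

lemma deg_eq_card_halfEdge (v : G.V) : G.deg v = #{h : G.HalfEdge | endpoint h = v} :=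
  (card_filter_halfEdge G fun h => endpoint h = v).symm

lemma sum_deg_filter (p : G.V → Prop) :
    ∑ v with p v, G.deg v = #{h : G.HalfEdge | p (endpoint h)} := by
  simp only [deg_eq_card_halfEdge]
  rw [card_eq_sum_card_fiberwise (f := endpoint) (t := {v | p v})]
  · refine sum_congr rfl fun v hv => congrArg card ?_
    ext h
    simp only [mem_filter, mem_univ, true_and] at hv ⊢
    exact ⟨fun hh => ⟨hh ▸ hv, hh⟩, And.right⟩
  · intro h hh
    simpa using hh

variable {G}

lemma Bridgeless.deg_ne_one (hG : G.Bridgeless) (v : G.V) : G.deg v ≠ 1 := by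
  intro hv
  rw [deg_eq_card_halfEdge, card_eq_one] at hv
  obtain ⟨h, hh⟩ := hv
  have hiff : ∀ g : G.HalfEdge, endpoint g = v ↔ g = h := by simpa [Finset.ext_iff] using hh
  have hother : endpoint (h.1, !h.2) ≠ v := fun heq => by
    simpa using congrArg Prod.snd ((hiff _).1 heq)
  refine hG h.1 (isBridge_of_cut (A := {v}) (fun f hf => ?_) rfl hother)
  have hends : ∀ b, endpoint (f, b) ≠ v := fun b heq => hf (congrArg Prod.fst ((hiff _).1 heq))
  exact iff_of_false (hends false) (hends true)

end HalfEdge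

end Multigraph

section Isomorphism

variable {G H K : Multigraph}

lemma IsIso.symm (h : IsIso G H) : IsIso H G := by
  obtain ⟨i⟩ := h
  refine ⟨⟨i.vMap.symm, i.eMap.symm, fun e => ?_⟩⟩
  simpa [Equiv.eq_symm_apply, Equiv.symm_apply_eq, eq_comm, and_comm] using
    i.ends_eq (i.eMap.symm e)

lemma IsIso.trans (h : IsIso G H) (h' : IsIso H K) : IsIso G K := by
  obtain ⟨i⟩ := h
  obtain ⟨j⟩ := h'
  refine ⟨⟨i.vMap.trans j.vMap, i.eMap.trans j.eMap, fun e => ?_⟩⟩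
  rcases i.ends_eq e with ⟨hs, ht⟩ | ⟨hs, ht⟩ <;>
    rcases j.ends_eq (i.eMap e) with ⟨hs', ht'⟩ | ⟨hs', ht'⟩ <;>
    simp_all

lemma MGIso.deg_eq (i : MGIso G H) (v : G.V) : H.deg (i.vMap v) = G.deg v := by
  simp only [Multigraph.deg, card_filter, ← sum_add_distrib]
  refine (Fintype.sum_equiv i.eMap _ _ fun e => ?_).symm
  rcases i.ends_eq e with ⟨hs, ht⟩ | ⟨hs, ht⟩
  · simp [hs, ht]
  · simp [hs, ht, add_comm]

lemma MGIso.connOn (i : MGIso G H) {S : Finset G.E} {T : Finset H.E}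
    (hST : ∀ e ∈ S, i.eMap e ∈ T) (h : G.ConnOn S) : H.ConnOn T := by
  refine h.of_map i.vMap (fun e he => ?_) fun y => ⟨i.vMap.symm y, by simpa using .refl _ _⟩
  have hreach := Multigraph.reach_src_tgt (hST e he)
  rcases i.ends_eq e with ⟨hs, ht⟩ | ⟨hs, ht⟩
  · rwa [hs, ht] at hreach
  · rw [hs, ht] at hreach
    exact hreach.symm

lemma IsIso.connected (h : IsIso G H) (hG : G.Connected) : H.Connected :=
  h.elim fun i => i.connOn (fun _ _ => mem_univ _) hG

lemma IsIso.bridgeless (h : IsIso G H) (hG : G.Bridgeless) : H.Bridgeless := by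
  obtain ⟨i⟩ := h
  refine Multigraph.bridgeless_iff.2 fun e =>
    i.connOn (fun f hf => ?_) (Multigraph.bridgeless_iff.1 hG (i.eMap.symm e))
  simpa [Equiv.eq_symm_apply] using hf

end Isomorphism

namespace Multigraph

section Subdivide

variable {D : Multigraph} {w : D.E → ℕ}

lemma chainNode_zero (e : D.E) : chainNode D w e 0 = .inl (Quot.mk _ (D.src e)) := by
  simp [chainNode]

lemma mk_src_eq_mk_tgt {e : D.E} (he : w e = 0) :
    Quot.mk (zeroRel D w) (D.src e) = Quot.mk (zeroRel D w) (D.tgt e) :=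
  Quot.sound ⟨e, he, rfl, rfl⟩

lemma chainNode_length (e : D.E) : chainNode D w e (w e) = .inl (Quot.mk _ (D.tgt e)) := by
  rcases Nat.eq_zero_or_pos (w e) with he | he
  · rw [he, chainNode_zero, mk_src_eq_mk_tgt he]
  · simp [chainNode, he.ne']

lemma chainNode_succ (e : D.E) (i : Fin (w e - 1)) : chainNode D w e (i + 1) = .inr ⟨e, i⟩ := by
  have hi : (i : ℕ) + 1 < w e := by omega
  simp [chainNode, hi]

lemma reach_chainNode {T : Finset (subdivide D w).E} {e : D.E} {a b : ℕ} (hab : a ≤ b)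
    (hb : b ≤ w e) (hT : ∀ j : Fin (w e), a ≤ j → j < b → ⟨e, j⟩ ∈ T) :
    (subdivide D w).Reach T (chainNode D w e a) (chainNode D w e b) := by
  induction b, hab using Nat.le_induction with
  | base => exact .refl T _
  | succ b hab ih =>
    exact (ih (by omega) fun j ha hj => hT j ha (by omega)).trans
      (reach_src_tgt (hT ⟨b, hb⟩ hab b.lt_succ_self))

lemma bridgeless_subdivide (hD : D.Bridgeless) (w : D.E → ℕ) : (subdivide D w).Bridgeless := by
  refine bridgeless_iff.2 fun ⟨e, i⟩ => (bridgeless_iff.1 hD e).of_map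
    (H := subdivide D w) (fun v => .inl (Quot.mk _ v)) (fun f hf => ?_) fun y => ?_
  · rw [← chainNode_zero, ← chainNode_length]
    exact reach_chainNode (Nat.zero_le _) le_rfl fun j _ _ => mem_univ_sdiff_singleton.2
      fun heq => mem_univ_sdiff_singleton.1 hf (congrArg Sigma.fst heq)
  · obtain q | ⟨f, j⟩ := y
    · exact q.inductionOn fun v => ⟨v, .refl _ _⟩
    rw [← chainNode_succ]
    by_cases hsrc : f = e → (j : ℕ) < i
    · refine ⟨D.src f, ?_⟩
      rw [← chainNode_zero]
      refine reach_chainNode (Nat.zero_le _) (by omega) fun l _ hl => mem_univ_sdiff_singleton.2 ?_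
      rintro ⟨⟩
      have := hsrc rfl
      omega
    · obtain ⟨rfl, -⟩ := Classical.not_imp.1 hsrc
      refine ⟨D.tgt f, ?_⟩
      rw [← chainNode_length]
      refine (reach_chainNode (by omega) le_rfl fun l hl _ => mem_univ_sdiff_singleton.2 ?_).symm
      rintro ⟨⟩
      omega

end Subdivide

section ZeroClasses

variable {D : Multigraph} {w : D.E → ℕ}

lemma card_quot_le_card_quot_add_one {α : Type} [Fintype α] {r r' : α → α → Prop} (a b : α)
    (h : ∀ x y, r' x y → r x y ∨ x = a ∧ y = b) :
    Fintype.card (Quot r) ≤ Fintype.card (Quot r') + 1 := by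
  let merged (x : α) : Quot r := if Quot.mk r x = Quot.mk r b then Quot.mk r a else Quot.mk r x
  have hmerged : ∀ x y, r' x y → merged x = merged y := by
    intro x y hxy
    rcases h x y hxy with hr | ⟨rfl, rfl⟩
    · simp only [merged, Quot.sound hr]
    · simp [merged]
  rw [← Fintype.card_option]
  refine Fintype.card_le_of_surjective
    (fun o : Option (Quot r') => o.elim (Quot.mk r b) (Quot.lift merged hmerged)) fun q => ?_
  obtain ⟨x, rfl⟩ := Quot.exists_rep q
  by_cases hx : Quot.mk r x = Quot.mk r b
  · exact ⟨none, hx.symm⟩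
  · exact ⟨some (Quot.mk _ x), if_neg hx⟩

/-- The relation from source to target of the edges in `S`; the elements of `Quot (D.edgeRel S)`
are the connected components of the spanning subgraph with edge set `S`. -/
def edgeRel (D : Multigraph) (S : Finset D.E) (u v : D.V) : Prop :=
  ∃ e ∈ S, D.src e = u ∧ D.tgt e = v

lemma card_quot_edgeRel_le (S U : Finset D.E) :
    Fintype.card (Quot (D.edgeRel S)) ≤ Fintype.card (Quot (D.edgeRel (S ∪ U))) + #U := by
  induction U using Finset.induction_on with
  | empty => simp
  | insert e U he ih =>
    have hstep : Fintype.card (Quot (D.edgeRel (S ∪ U))) ≤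
        Fintype.card (Quot (D.edgeRel (S ∪ insert e U))) + 1 := by
      refine card_quot_le_card_quot_add_one (D.src e) (D.tgt e) ?_
      rintro _ _ ⟨f, hf, rfl, rfl⟩
      rw [union_insert, mem_insert] at hf
      rcases hf with rfl | hf
      · exact .inr ⟨rfl, rfl⟩
      · exact .inl ⟨f, hf, rfl, rfl⟩
    rw [card_insert_of_notMem he]
    omega

lemma zeroRel_eq_edgeRel (w : D.E → ℕ) : zeroRel D w = D.edgeRel {e | w e = 0} := by
  ext u v
  simp [zeroRel, edgeRel]

lemma card_quot_edgeRel_add_card_le (hz : ZeroAcyclic D w) {S : Finset D.E}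
    (hS : ∀ e ∈ S, w e = 0) :
    Fintype.card (Quot (D.edgeRel S)) + #S ≤ Fintype.card D.V := by
  set Z : Finset D.E := {e | w e = 0}
  have hSZ : S ⊆ Z := fun e he => mem_filter_univ _ |>.2 (hS e he)
  have hle := card_quot_edgeRel_le S (Z \ S)
  have hforest : Fintype.card (Quot (D.edgeRel Z)) + #Z = Fintype.card D.V := by
    rw [← hz]
    congr! 2
    rw [zeroRel_eq_edgeRel]
  rw [union_sdiff_of_subset hSZ] at hle
  have := card_sdiff_add_card_eq_card hSZ
  omega

lemma card_zero_edges_lt_card_class (hz : ZeroAcyclic D w) (q : Quot (zeroRel D w)) :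
    #{e | w e = 0 ∧ Quot.mk (zeroRel D w) (D.src e) = q} <
      #{v | Quot.mk (zeroRel D w) v = q} := by
  set S : Finset D.E := {e | w e = 0 ∧ Quot.mk (zeroRel D w) (D.src e) = q} with hS
  have hupper := card_quot_edgeRel_add_card_le hz (S := S) fun e he => (mem_filter.1 he).2.1
  -- Each vertex outside the class `q` is kept apart, so `S` has a further component inside `q`.
  have hlower : #{v | Quot.mk (zeroRel D w) v ≠ q} + 1 ≤ Fintype.card (Quot (D.edgeRel S)) := by
    let outside (v : D.V) : Option {v // Quot.mk (zeroRel D w) v ≠ q} :=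
      if h : Quot.mk (zeroRel D w) v = q then none else some ⟨v, h⟩
    have houtside : ∀ u v, D.edgeRel S u v → outside u = outside v := by
      rintro _ _ ⟨e, he, rfl, rfl⟩
      obtain ⟨he0, hsrc⟩ : w e = 0 ∧ Quot.mk (zeroRel D w) (D.src e) = q := by simpa [hS] using he
      have htgt : Quot.mk (zeroRel D w) (D.tgt e) = q := (mk_src_eq_mk_tgt he0).symm.trans hsrc
      simp only [outside, dif_pos hsrc, dif_pos htgt]
    rw [← Fintype.card_subtype, ← Fintype.card_option]
    refine Fintype.card_le_of_surjective (Quot.lift outside houtside) ?_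
    rintro (_ | ⟨v, hv⟩)
    · obtain ⟨v, hv⟩ := Quot.exists_rep q
      exact ⟨Quot.mk _ v, dif_pos hv⟩
    · exact ⟨Quot.mk _ v, dif_neg hv⟩
  have hsplit := card_filter_add_card_filter_not (s := univ) fun v => Quot.mk (zeroRel D w) v = q
  change _ + #{v | Quot.mk (zeroRel D w) v ≠ q} = _ at hsplit
  rw [card_univ] at hsplit
  omega

lemma card_halfEdge_class_le_deg (q : Quot (zeroRel D w)) :
    #{h : D.HalfEdge | 0 < w h.1 ∧ Quot.mk (zeroRel D w) (endpoint h) = q} ≤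
      (subdivide D w).deg (.inl q) := by
  refine (card_le_card_of_surjOn (fun x => (x.1.1, x.2)) ?_).trans_eq
    (deg_eq_card_halfEdge _ _).symm
  rintro ⟨e, b⟩ h
  obtain ⟨he, rfl⟩ : 0 < w e ∧ Quot.mk _ (endpoint (e, b)) = q := by simpa using h
  cases b with
  | false =>
    exact ⟨(⟨e, 0, he⟩, false), mem_coe.2 (mem_filter_univ _ |>.2 (chainNode_zero e)), rfl⟩
  | true =>
    have hlast : chainNode D w e (w e - 1 + 1) = .inl (Quot.mk _ (D.tgt e)) := by
      rw [Nat.sub_add_cancel he, chainNode_length]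
    exact ⟨(⟨e, w e - 1, by omega⟩, true), mem_coe.2 (mem_filter_univ _ |>.2 hlast), rfl⟩

lemma two_le_deg_subdivide (hz : ZeroAcyclic D w) (hD : ∀ v, 2 ≤ D.deg v)
    (x : (subdivide D w).V) : 2 ≤ (subdivide D w).deg x := by
  obtain q | ⟨e, i⟩ := x
  · refine le_trans ?_ (card_halfEdge_class_le_deg q)
    have hclass := card_zero_edges_lt_card_class hz q
    have hdeg : #{v | Quot.mk (zeroRel D w) v = q} * 2 ≤
        #{h : D.HalfEdge | Quot.mk (zeroRel D w) (endpoint h) = q} := by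
      rw [← sum_deg_filter D fun v => Quot.mk (zeroRel D w) v = q]
      exact card_nsmul_le_sum _ _ _ fun v _ => hD v
    have hzero : #{h : D.HalfEdge | w h.1 = 0 ∧ Quot.mk (zeroRel D w) (endpoint h) = q} =
        2 * #{e | w e = 0 ∧ Quot.mk (zeroRel D w) (D.src e) = q} := by
      refine (card_filter_halfEdge D _).trans ?_
      rw [two_mul]
      refine congrArg (_ + ·) (congrArg card (filter_congr fun e _ => and_congr_right fun he => ?_))
      rw [mk_src_eq_mk_tgt he, endpoint, cond_true]
    have hsplit := card_filter_add_card_filter_not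
      (s := {h : D.HalfEdge | Quot.mk (zeroRel D w) (endpoint h) = q}) fun h => w h.1 = 0
    simp only [filter_filter, ← Nat.pos_iff_ne_zero, and_comm] at hsplit hzero ⊢
    omega
  · have hlt : (i : ℕ) + 1 < w e := by omega
    refine (one_lt_card.2 ⟨(⟨e, i, by omega⟩, true), ?_, (⟨e, i + 1, hlt⟩, false), ?_, ?_⟩).trans_eq
      (deg_eq_card_halfEdge _ _).symm
    · exact mem_filter_univ _ |>.2 (chainNode_succ e i)
    · exact mem_filter_univ _ |>.2 (chainNode_succ e i)
    · exact fun heq => Bool.noConfusion (congrArg Prod.snd heq)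

end ZeroClasses

/-- The endpoints of the edge `e` are `u` and `v`, in either order. -/
def Joins (G : Multigraph) (e : G.E) (u v : G.V) : Prop :=
  (G.src e = u ∧ G.tgt e = v) ∨ (G.src e = v ∧ G.tgt e = u)

lemma Joins.symm {G : Multigraph} {e : G.E} {u v : G.V} (h : G.Joins e u v) : G.Joins e v u :=
  Or.symm h

section EdgeSubdivision

variable {G H : Multigraph}

/-- The graph obtained from `G` by inserting a new vertex `none` of degree 2 into the edge `f`:
the edge `some f` keeps its source and now ends at the new vertex, and the new edge `none` leads
from there to the target of `f`. -/
def subdivideEdge (G : Multigraph) (f : G.E) : Multigraph where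
  V := Option G.V
  E := Option G.E
  src e := e.elim none fun e => some (G.src e)
  tgt e := e.elim (some (G.tgt f)) fun e => if e = f then none else some (G.tgt e)

lemma tgt_subdivideEdge_self (f : G.E) : (G.subdivideEdge f).tgt (some f) = none :=
  if_pos rfl

lemma tgt_subdivideEdge_of_ne {e f : G.E} (h : e ≠ f) :
    (G.subdivideEdge f).tgt (some e) = some (G.tgt e) :=
  if_neg h

lemma tgt_subdivideEdge_swap (f : G.E) (e : Option G.E) :
    (G.subdivideEdge f).tgt (Equiv.swap none (some f) e) = e.map G.tgt := by
  obtain _ | e := e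
  · rw [Equiv.swap_apply_left, tgt_subdivideEdge_self, Option.map_none]
  · by_cases he : e = f
    · rw [he, Equiv.swap_apply_right]
      rfl
    · rw [Equiv.swap_apply_of_ne_of_ne (Option.some_ne_none e) (by simpa using he),
        tgt_subdivideEdge_of_ne he, Option.map_some]

lemma card_filter_option {α : Type} [Fintype α] (p : Option α → Prop) [DecidablePred p]
    [Decidable (p none)] : #{o | p o} = (if p none then 1 else 0) + #{a | p (some a)} := by
  simp only [card_filter, Fintype.sum_option]
  congr!

lemma card_filter_comp_equiv {α β : Type} [Fintype α] [Fintype β] (σ : α ≃ β) (p : β → Prop)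
    [DecidablePred p] : #{a | p (σ a)} = #{b | p b} :=
  card_equiv σ (by simp)

lemma deg_subdivideEdge_some (f : G.E) (x : G.V) :
    (G.subdivideEdge f).deg (some x) = G.deg x := by
  have hcard : ∀ {p : Option G.E → Prop} {q : G.E → Prop}, ¬ p none → (∀ e, p (some e) ↔ q e) →
      #{o | p o} = #{e | q e} := fun {p q} hnone hsome => by
    simp only [card_filter_option, hnone, hsome, if_false, zero_add]
  refine congrArg₂ (· + ·) (hcard (by rintro ⟨⟩) fun e => Option.some_inj) ?_
  refine (card_filter_comp_equiv (Equiv.swap none (some f)) _).symm.trans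
    (hcard ?_ fun e => ?_) <;> rw [tgt_subdivideEdge_swap]
  · rintro ⟨⟩
  · exact Option.some_inj

lemma ConnOn.of_subdivideEdge {f : G.E} {S : Finset G.E} {T : Finset (G.subdivideEdge f).E}
    (hTS : ∀ e, some e ∈ T → e ∈ S) (h : (G.subdivideEdge f).ConnOn T) : G.ConnOn S := by
  refine h.of_map (fun x : Option G.V => x.getD (G.tgt f)) ?_ fun y => ⟨some y, .refl _ _⟩
  rintro (_ | e) he
  · exact .refl _ _
  · have htgt : Option.getD ((G.subdivideEdge f).tgt (some e)) (G.tgt f) = G.tgt e := by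
      by_cases he : e = f
      · rw [he, tgt_subdivideEdge_self]
        rfl
      · rw [tgt_subdivideEdge_of_ne he]
        rfl
    exact htgt.symm ▸ reach_src_tgt (hTS e he)

/-- `G` arises, up to isomorphism, from `H` by inserting one vertex of degree 2 into an edge. -/
def IsEdgeSubdivision (G H : Multigraph) : Prop :=
  ∃ f : H.E, IsIso G (H.subdivideEdge f)

/-- `G` arises, up to isomorphism, from `H` by repeatedly inserting vertices of degree 2 into
edges. -/
def IsSubdivision : Multigraph → Multigraph → Prop :=
  Relation.ReflTransGen IsEdgeSubdivision

lemma IsEdgeSubdivision.nV_eq (h : G.IsEdgeSubdivision H) : G.nV = H.nV + 1 := by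
  obtain ⟨f, ⟨i⟩⟩ := h
  exact (Fintype.card_congr i.vMap).trans Fintype.card_option

lemma IsEdgeSubdivision.nE_eq (h : G.IsEdgeSubdivision H) : G.nE = H.nE + 1 := by
  obtain ⟨f, ⟨i⟩⟩ := h
  exact (Fintype.card_congr i.eMap).trans Fintype.card_option

lemma IsEdgeSubdivision.connected (h : G.IsEdgeSubdivision H) (hG : G.Connected) :
    H.Connected := by
  obtain ⟨f, hf⟩ := h
  exact ConnOn.of_subdivideEdge (fun _ _ => mem_univ _) (hf.connected hG)

lemma IsEdgeSubdivision.bridgeless (h : G.IsEdgeSubdivision H) (hG : G.Bridgeless) :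
    H.Bridgeless := by
  obtain ⟨f, hf⟩ := h
  refine bridgeless_iff.2 fun e =>
    ConnOn.of_subdivideEdge (fun g hg => ?_) (bridgeless_iff.1 (hf.bridgeless hG) (some e))
  exact mem_univ_sdiff_singleton.2 fun hge =>
    mem_univ_sdiff_singleton.1 hg (congrArg some hge)

lemma IsEdgeSubdivision.exists_deg_eq (h : G.IsEdgeSubdivision H) (x : H.V) :
    ∃ v : G.V, G.deg v = H.deg x := by
  obtain ⟨f, ⟨i⟩⟩ := h
  obtain ⟨v, hv⟩ := i.vMap.surjective (some x)
  exact ⟨v, (i.deg_eq v).symm.trans (hv ▸ deg_subdivideEdge_some f x)⟩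

lemma IsSubdivision.bridgeless (h : G.IsSubdivision H) (hG : G.Bridgeless) : H.Bridgeless := by
  induction h with
  | refl => exact hG
  | tail _ hstep ih => exact hstep.bridgeless ih

end EdgeSubdivision

section Suppression

variable {G : Multigraph} {v : G.V} {a b : G.HalfEdge}

/-- `v` is a loopless vertex of degree 2 whose half-edges are `a` and `b`. -/
def IsLooplessDegTwo (G : Multigraph) (v : G.V) (a b : G.HalfEdge) : Prop :=
  a.1 ≠ b.1 ∧ ∀ h : G.HalfEdge, endpoint h = v ↔ h = a ∨ h = b

lemma IsLooplessDegTwo.symm (h : G.IsLooplessDegTwo v a b) : G.IsLooplessDegTwo v b a :=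
  ⟨h.1.symm, fun x => (h.2 x).trans or_comm⟩

lemma IsLooplessDegTwo.endpoint_opposite_ne (h : G.IsLooplessDegTwo v a b) :
    endpoint (a.1, !a.2) ≠ v := by
  intro heq
  rcases (h.2 _).1 heq with heq | heq
  · simpa using congrArg Prod.snd heq
  · exact h.1 (congrArg Prod.fst heq :)

lemma IsLooplessDegTwo.endpoint_ne (h : G.IsLooplessDegTwo v a b) {e : G.E} (ha : e ≠ a.1)
    (hb : e ≠ b.1) (s : Bool) : endpoint (e, s) ≠ v := by
  intro heq
  rcases (h.2 _).1 heq with rfl | rfl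
  · exact ha rfl
  · exact hb rfl

/-- The graph obtained from `G` by suppressing the loopless vertex `v` of degree 2: the edge
containing `b` is removed, and the one containing `a` now joins the two neighbours of `v`. -/
def suppress (G : Multigraph) {v : G.V} {a b : G.HalfEdge} (h : G.IsLooplessDegTwo v a b) :
    Multigraph where
  V := {x // x ≠ v}
  E := {e // e ≠ b.1}
  src e := if ha : e.1 = a.1 then ⟨endpoint (a.1, !a.2), h.endpoint_opposite_ne⟩
    else ⟨G.src e.1, h.endpoint_ne ha e.2 false⟩
  tgt e := if ha : e.1 = a.1 then ⟨endpoint (b.1, !b.2), h.symm.endpoint_opposite_ne⟩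
    else ⟨G.tgt e.1, h.endpoint_ne ha e.2 true⟩

lemma joins_endpoint (h : G.HalfEdge) : G.Joins h.1 (endpoint h) (endpoint (h.1, !h.2)) := by
  obtain ⟨e, _ | _⟩ := h
  · exact .inl ⟨rfl, rfl⟩
  · exact .inr ⟨rfl, rfl⟩

lemma isEdgeSubdivision_suppress (h : G.IsLooplessDegTwo v a b) :
    G.IsEdgeSubdivision (G.suppress h) := by
  have ha : endpoint a = v := (h.2 a).2 (.inl rfl)
  have hb : endpoint b = v := (h.2 b).2 (.inr rfl)
  let g : (G.suppress h).E := ⟨a.1, h.1⟩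
  let ι : Option (G.suppress h).V ≃ G.V := Equiv.optionSubtypeNe v
  refine ⟨g, IsIso.symm ⟨⟨ι, Equiv.optionSubtypeNe b.1, ?_⟩⟩⟩
  rintro (_ | f)
  · have htgt : (G.suppress h).tgt g = (⟨_, h.symm.endpoint_opposite_ne⟩ : {x // x ≠ v}) :=
      dif_pos rfl
    change G.Joins b.1 v (ι (some ((G.suppress h).tgt g)))
    rw [htgt]
    exact hb ▸ joins_endpoint b
  change G.Joins f.1 (ι (some ((G.suppress h).src f)))
    (ι (((G.suppress h).subdivideEdge g).tgt (some f)))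
  by_cases hf : f.1 = a.1
  · obtain rfl : f = g := Subtype.ext hf
    have hsrc : (G.suppress h).src g = (⟨_, h.endpoint_opposite_ne⟩ : {x // x ≠ v}) :=
      dif_pos rfl
    rw [tgt_subdivideEdge_self, hsrc]
    exact (ha ▸ joins_endpoint a : G.Joins a.1 v (endpoint (a.1, !a.2))).symm
  · have hsrc : (G.suppress h).src f = (⟨G.src f.1, _⟩ : {x // x ≠ v}) := dif_neg hf
    have htgt : (G.suppress h).tgt f = (⟨G.tgt f.1, _⟩ : {x // x ≠ v}) := dif_neg hf
    rw [tgt_subdivideEdge_of_ne fun hfg => hf (congrArg Subtype.val hfg), hsrc, htgt]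
    exact .inl ⟨rfl, rfl⟩

lemma four_le_deg_of_forall_loop (hG : G.Connected) (hlt : G.nV < G.nE)
    (hloop : ∀ e, G.src e = v ↔ G.tgt e = v) : 4 ≤ G.deg v := by
  have hall : ∀ x, x = v := fun x => (Reach.mem_iff (A := {v}) (fun e _ => hloop e) (hG v x)).1 rfl
  have hpos : 0 < G.nV := Fintype.card_pos_iff.2 ⟨v⟩
  have hdeg : G.deg v = G.nE + G.nE := by simp [deg, hall, nE]
  omega

lemma Connected.exists_isLooplessDegTwo (hG : G.Connected) (hlt : G.nV < G.nE)
    (hv1 : G.deg v ≠ 1) (hv3 : G.deg v < 3) : ∃ a b, G.IsLooplessDegTwo v a b := by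
  obtain ⟨e, he⟩ : ∃ e, ¬ (G.src e = v ↔ G.tgt e = v) := by
    by_contra! hloop
    have := four_le_deg_of_forall_loop hG hlt hloop
    omega
  obtain ⟨s, hs, hs'⟩ : ∃ s, endpoint (e, s) = v ∧ endpoint (e, !s) ≠ v := by
    by_cases hsrc : G.src e = v
    · exact ⟨false, hsrc, fun htgt => he (iff_of_true hsrc htgt)⟩
    · exact ⟨true, by_contra fun htgt => he (iff_of_false hsrc htgt), hsrc⟩
  have hmem : (e, s) ∈ ({h | endpoint h = v} : Finset G.HalfEdge) := by simpa using hs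
  have hpos := card_pos.2 ⟨_, hmem⟩
  rw [deg_eq_card_halfEdge] at hv1 hv3
  obtain ⟨b, hb⟩ := card_eq_one.1
    (show #(({h | endpoint h = v} : Finset G.HalfEdge).erase (e, s)) = 1 by
      rw [card_erase_of_mem hmem]; omega)
  have hhalves : ∀ h : G.HalfEdge, endpoint h = v ↔ h = (e, s) ∨ h = b := fun h => by
    rw [← mem_filter_univ (p := fun h => endpoint h = v), ← insert_erase hmem, hb]
    simp
  refine ⟨(e, s), b, fun hedge => hs' ((hhalves _).2 (.inr ?_)), hhalves⟩
  have hne : b ≠ (e, s) := fun hbs => by simpa [hbs] using (Finset.ext_iff.1 hb b).2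
  exact Prod.ext hedge (Bool.not_eq.2 fun hb' => hne (Prod.ext hedge.symm hb'.symm))

lemma exists_isSubdivision_three_le_deg (hG : G.Connected) (hlt : G.nV < G.nE)
    (hdeg : ∀ v, G.deg v ≠ 1) : ∃ H, G.IsSubdivision H ∧ ∀ v, 3 ≤ H.deg v := by
  induction hn : G.nV using Nat.strong_induction_on generalizing G with
  | _ n ih =>
    by_cases hmin : ∀ v, 3 ≤ G.deg v
    · exact ⟨G, .refl, hmin⟩
    push Not at hmin
    obtain ⟨v, hv⟩ := hmin
    obtain ⟨a, b, hab⟩ := hG.exists_isLooplessDegTwo hlt (hdeg v) hv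
    have hstep := isEdgeSubdivision_suppress hab
    have hV := hstep.nV_eq
    have hE := hstep.nE_eq
    obtain ⟨H, hH, hmin⟩ := ih _ (by omega) (hstep.connected hG) (by omega)
      (fun x => by obtain ⟨u, hu⟩ := hstep.exists_deg_eq x; exact hu ▸ hdeg u) rfl
    exact ⟨H, .head hstep hH, hmin⟩

end Suppression

end Multigraph

lemma MGIso.isIso_subdivideEdge {G H : Multigraph} (i : MGIso G H) (f : G.E) :
    IsIso (G.subdivideEdge f) (H.subdivideEdge (i.eMap f)) := by
  have hne : ∀ e, e ≠ f → (H.subdivideEdge (i.eMap f)).Joins (some (i.eMap e))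
      (some (i.vMap (G.src e))) (i.vMap.optionCongr ((G.subdivideEdge f).tgt (some e))) := by
    intro e he
    rw [Multigraph.tgt_subdivideEdge_of_ne he]
    have htgt := Multigraph.tgt_subdivideEdge_of_ne (i.eMap.injective.ne he)
    exact (i.ends_eq e).imp
      (And.imp (congrArg some) fun h => htgt.trans (congrArg some h))
      (And.imp (congrArg some) fun h => htgt.trans (congrArg some h))
  rcases i.ends_eq f with ⟨hsrc, htgt⟩ | ⟨hsrc, htgt⟩
  · refine ⟨⟨i.vMap.optionCongr, i.eMap.optionCongr, ?_⟩⟩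
    rintro (_ | e)
    · exact .inl ⟨rfl, congrArg some htgt⟩
    · by_cases he : e = f
      · subst he
        refine .inl ⟨congrArg some hsrc, ?_⟩
        rw [Multigraph.tgt_subdivideEdge_self]
        exact Multigraph.tgt_subdivideEdge_self _
      · exact hne e he
  · refine ⟨⟨i.vMap.optionCongr,
      i.eMap.optionCongr.trans (Equiv.swap none (some (i.eMap f))), ?_⟩⟩
    rintro (_ | e)
    · change (H.subdivideEdge _).Joins (Equiv.swap none (some (i.eMap f)) none) _ _
      rw [Equiv.swap_apply_left]
      exact .inr ⟨congrArg some hsrc, Multigraph.tgt_subdivideEdge_self _⟩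
    change (H.subdivideEdge _).Joins (Equiv.swap none (some (i.eMap f)) (some (i.eMap e))) _ _
    by_cases he : e = f
    · subst he
      rw [Equiv.swap_apply_right, Multigraph.tgt_subdivideEdge_self]
      exact .inr ⟨rfl, congrArg some htgt⟩
    · rw [Equiv.swap_apply_of_ne_of_ne (Option.some_ne_none _)
        ((Option.some_injective _).ne (i.eMap.injective.ne he))]
      exact hne e he

section InsertPoint

variable {E : Type} {m m' : E → ℕ} {e : E} {p : ℕ}

/-- Position `j` of the chain `f`, renumbered after a new position `p` has been opened in the
chain `e`. -/
def shiftAt (e : E) (p : ℕ) (f : E) (j : ℕ) : ℕ := if f = e ∧ p ≤ j then j + 1 else j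

lemma sigma_fin_ext {x y : Σ f, Fin (m f)} (h₁ : x.1 = y.1) (h₂ : (x.2 : ℕ) = y.2) : x = y := by
  obtain ⟨f, i⟩ := x
  obtain ⟨f, j⟩ := y
  obtain rfl := h₁
  exact congrArg (Sigma.mk f) (Fin.ext h₂)

lemma exists_equiv_shiftAt (hp : p ≤ m e) (he : m' e = m e + 1)
    (hne : ∀ f ≠ e, m' f = m f) : ∃ σ : Option (Σ f, Fin (m f)) ≃ Σ f, Fin (m' f),
      ((σ none).1 = e ∧ ((σ none).2 : ℕ) = p) ∧
      ∀ f j, (σ (some ⟨f, j⟩)).1 = f ∧ ((σ (some ⟨f, j⟩)).2 : ℕ) = shiftAt e p f j := by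
  have hlt : ∀ f (j : Fin (m f)), shiftAt e p f j < m' f := by
    intro f j
    have := j.isLt
    by_cases hf : f = e
    · subst hf
      grind [shiftAt]
    · grind [shiftAt]
  let φ (o : Option (Σ f, Fin (m f))) : Σ f, Fin (m' f) :=
    o.elim ⟨e, p, by omega⟩ fun x => ⟨x.1, shiftAt e p x.1 x.2, hlt _ _⟩
  have hφ : φ.Bijective := by
    constructor
    · intro x y hxy
      have h₁ : (φ x).1 = (φ y).1 := by rw [hxy]
      have h₂ : ((φ x).2 : ℕ) = (φ y).2 := by rw [hxy]
      obtain _ | x := x <;> obtain _ | y := y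
      · rfl
      · grind [shiftAt]
      · grind [shiftAt]
      · exact congrArg some (sigma_fin_ext h₁ (by grind [shiftAt]))
    · rintro ⟨f, j⟩
      by_cases hfe : f = e
      · subst hfe
        rcases lt_trichotomy (j : ℕ) p with hj | hj | hj
        · exact ⟨some ⟨f, j, by omega⟩, sigma_fin_ext rfl (by grind [shiftAt])⟩
        · exact ⟨none, sigma_fin_ext rfl hj.symm⟩
        · exact ⟨some ⟨f, j - 1, by omega⟩, sigma_fin_ext rfl (by grind [shiftAt])⟩
      · exact ⟨some ⟨f, j, by grind⟩, sigma_fin_ext rfl (by grind [shiftAt])⟩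
  exact ⟨.ofBijective φ hφ, ⟨rfl, rfl⟩, fun f j => ⟨rfl, rfl⟩⟩

end InsertPoint

namespace Multigraph

section LengthenChain

variable {D : Multigraph} {w w' : D.E → ℕ} {e : D.E} {i : ℕ}

lemma zeroRel_congr (h : ∀ f, w f = 0 ↔ w' f = 0) (u v : D.V) :
    zeroRel D w u v ↔ zeroRel D w' u v :=
  exists_congr fun f => and_congr_left' (h f)

lemma exists_equiv_chainNode (hi : i < w e) (he : w' e = w e + 1) (hne : ∀ f ≠ e, w' f = w f) :
    ∃ ν : Option (subdivide D w).V ≃ (subdivide D w').V, ν none = chainNode D w' e (i + 1) ∧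
      ∀ f j, j ≤ w f →
        ν (some (chainNode D w f j)) = chainNode D w' f (shiftAt e (i + 1) f j) := by
  have hzero : ∀ f, w f = 0 ↔ w' f = 0 := fun f => by grind
  obtain ⟨σ, hnone, hsome⟩ := exists_equiv_shiftAt (m := fun f => w f - 1)
    (m' := fun f => w' f - 1) (e := e) (p := i) (by omega) (by omega)
    fun f hf => by rw [hne f hf]
  let ν : Option (subdivide D w).V ≃ (subdivide D w').V :=
    ((Equiv.optionEquivSumPUnit.{0} _).trans (Equiv.sumAssoc _ _ _)).trans
      ((Quot.congrRight (zeroRel_congr hzero)).sumCongr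
        ((Equiv.optionEquivSumPUnit.{0} _).symm.trans σ))
  refine ⟨ν, ?_, fun f j hj => ?_⟩
  · exact (chainNode_succ (σ none).1 (σ none).2).symm.trans
      (congrArg₂ (chainNode D w') hnone.1 (congrArg (· + 1) hnone.2))
  · obtain rfl | hpos := Nat.eq_zero_or_pos j
    · have hshift : shiftAt e (i + 1) f 0 = 0 := by grind [shiftAt]
      rw [chainNode_zero, hshift, chainNode_zero]
      rfl
    obtain rfl | hlt := hj.eq_or_lt
    · have hshift : shiftAt e (i + 1) f (w f) = w' f := by grind [shiftAt]
      rw [chainNode_length, hshift, chainNode_length]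
      rfl
    obtain ⟨l, rfl⟩ := Nat.exists_eq_add_of_lt hpos
    have hshift : shiftAt e i f l + 1 = shiftAt e (i + 1) f (l + 1) := by grind [shiftAt]
    let x : Σ f, Fin (w f - 1) := ⟨f, l, by omega⟩
    rw [zero_add, chainNode_succ f x.2, ← hshift]
    exact (chainNode_succ (σ (some x)).1 (σ (some x)).2).symm.trans
      (congrArg₂ (chainNode D w') (hsome f x.2).1 (congrArg (· + 1) (hsome f x.2).2))

lemma isIso_subdivideEdge_subdivide (i : Fin (w e)) (he : w' e = w e + 1)
    (hne : ∀ f ≠ e, w' f = w f) :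
    IsIso ((subdivide D w).subdivideEdge ⟨e, i⟩) (subdivide D w') := by
  obtain ⟨ν, hν, hν'⟩ := exists_equiv_chainNode i.isLt he hne
  obtain ⟨σ, hσ, hσ'⟩ := exists_equiv_shiftAt (p := i + 1) i.isLt he hne
  have hsrc : ∀ x f j, (σ x).1 = f ∧ ((σ x).2 : ℕ) = j →
      (subdivide D w').src (σ x) = chainNode D w' f j :=
    fun x f j h => congrArg₂ (chainNode D w') h.1 h.2
  have htgt : ∀ x f j, (σ x).1 = f ∧ ((σ x).2 : ℕ) = j →
      (subdivide D w').tgt (σ x) = chainNode D w' f (j + 1) :=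
    fun x f j h => congrArg₂ (chainNode D w') h.1 (congrArg (· + 1) h.2)
  refine ⟨⟨ν, σ, ?_⟩⟩
  rintro (_ | ⟨f, j⟩)
  · refine .inl ⟨(hsrc _ _ _ hσ).trans hν.symm,
      (htgt _ _ _ hσ).trans (.trans ?_ (hν' e (i + 1) i.isLt).symm)⟩
    congr 1
    grind [shiftAt]
  · refine .inl ⟨(hsrc _ _ _ (hσ' f j)).trans (hν' f j j.isLt.le).symm,
      (htgt _ _ _ (hσ' f j)).trans ?_⟩
    by_cases hfj : (⟨f, j⟩ : Σ f, Fin (w f)) = ⟨e, i⟩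
    · cases hfj
      have hshift : shiftAt e (i + 1) e i = i := by grind [shiftAt]
      rw [hshift]
      exact hν.symm.trans (congrArg ν (tgt_subdivideEdge_self (G := subdivide D w) _).symm)
    · have hshift : shiftAt e (i + 1) f j + 1 = shiftAt e (i + 1) f (j + 1) := by
        have hij : f = e → (j : ℕ) ≠ i := fun h h' => hfj (sigma_fin_ext h h')
        grind [shiftAt]
      rw [hshift]
      exact (hν' f (j + 1) j.isLt).symm.trans
        (congrArg ν (tgt_subdivideEdge_of_ne (G := subdivide D w) hfj).symm)

end LengthenChain

end Multigraph

lemma ZeroAcyclic.congr {D : Multigraph} {w w' : D.E → ℕ} (hw : ZeroAcyclic D w)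
    (h : ∀ f, w f = 0 ↔ w' f = 0) : ZeroAcyclic D w' := by
  simpa only [ZeroAcyclic, h, Fintype.card_congr (Quot.congrRight (Multigraph.zeroRel_congr h))]
    using hw

section WeakDistillation

variable {D G H : Multigraph}

lemma IsWeakDistillation.of_isIso (h : IsWeakDistillation D H) (hGH : IsIso G H) :
    IsWeakDistillation D G := by
  obtain ⟨w, hw, hH⟩ := h
  exact ⟨w, hw, hGH.trans hH⟩

lemma IsWeakDistillation.refl (D : Multigraph) : IsWeakDistillation D D := by
  let w : D.E → ℕ := fun _ => 1
  let q : D.V ≃ Quot (zeroRel D w) :=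
    { toFun := Quot.mk _
      invFun := Quot.lift id fun _ _ ⟨_, he, _⟩ => absurd he one_ne_zero
      left_inv := fun _ => rfl
      right_inv := fun x => x.inductionOn fun _ => rfl }
  have hempty : IsEmpty (Σ f : D.E, Fin (w f - 1)) := ⟨fun x => x.2.elim0⟩
  refine ⟨w, ?_, ⟨⟨q.trans (Equiv.sumEmpty _ _).symm, (Equiv.sigmaUnique _ _).symm, fun e =>
    .inl ⟨Multigraph.chainNode_zero e, Multigraph.chainNode_length (w := w) e⟩⟩⟩⟩
  simp [ZeroAcyclic, w, ← Fintype.card_congr q]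

lemma IsWeakDistillation.subdivideEdge (h : IsWeakDistillation D G) (f : G.E) :
    IsWeakDistillation D (G.subdivideEdge f) := by
  obtain ⟨w, hw, ⟨i⟩⟩ := h
  let e : D.E := (i.eMap f).1
  have hzero : ∀ g, w g = 0 ↔ Function.update w e (w e + 1) g = 0 := fun g => by
    have hpos : w e ≠ 0 := (i.eMap f).2.size_positive.ne'
    grind [Function.update_apply]
  exact ⟨Function.update w e (w e + 1), hw.congr hzero, (i.isIso_subdivideEdge f).trans
    (Multigraph.isIso_subdivideEdge_subdivide (i.eMap f).2 (Function.update_self ..)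
      fun g hg => Function.update_of_ne hg ..)⟩

lemma Multigraph.IsSubdivision.isWeakDistillation (hGH : G.IsSubdivision H)
    (hDH : IsWeakDistillation D H) : IsWeakDistillation D G := by
  induction hGH using Relation.ReflTransGen.head_induction_on with
  | refl => exact hDH
  | head hstep _ ih =>
    obtain ⟨f, hf⟩ := hstep
    exact (ih.subdivideEdge f).of_isIso hf

end WeakDistillation

namespace Multigraph

section Expand

variable {G : Multigraph} {v : G.V} {T : Finset G.HalfEdge}

/-- Where the half-edge `h` is attached once the half-edges in `T` are moved to a new vertex
`none`. -/
def expandEnd (T : Finset G.HalfEdge) (h : G.HalfEdge) : Option G.V :=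
  if h ∈ T then none else some (endpoint h)

/-- The expansion of `G` at `v`: a new vertex `none` is joined to `v` by the new edge `none`, and
the half-edges in `T`, which are meant to be attached to `v`, are moved to the new vertex. -/
def expand (G : Multigraph) (v : G.V) (T : Finset G.HalfEdge) : Multigraph where
  V := Option G.V
  E := Option G.E
  src e := e.elim none fun e => expandEnd T (e, false)
  tgt e := e.elim (some v) fun e => expandEnd T (e, true)

lemma deg_expand (x : Option G.V) : (G.expand v T).deg x =
    (if none = x then 1 else 0) + (if some v = x then 1 else 0) + #{h | expandEnd T h = x} := by
  rw [card_filter_halfEdge G fun h => expandEnd T h = x, add_add_add_comm]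
  refine congrArg₂ (· + ·)
    ((card_filter_option fun e : Option G.E => (G.expand v T).src e = x).trans ?_)
    ((card_filter_option fun e : Option G.E => (G.expand v T).tgt e = x).trans ?_) <;> congr!

lemma deg_expand_none : (G.expand v T).deg none = #T + 1 := by
  have hT : ({h | expandEnd T h = none} : Finset G.HalfEdge) = T := by
    ext h
    simp [expandEnd]
  refine (deg_expand _).trans ?_
  rw [hT]
  simp [add_comm]

lemma filter_expandEnd_eq_some (x : G.V) :
    (univ.filter fun h => expandEnd T h = some x) = (univ.filter fun h => endpoint h = x) \ T := by
  ext h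
  simp [expandEnd, and_comm]

lemma deg_expand_of_ne (hT : ∀ h ∈ T, endpoint h = v) {x : G.V} (hx : x ≠ v) :
    (G.expand v T).deg (some x) = G.deg x := by
  refine (deg_expand _).trans ?_
  rw [filter_expandEnd_eq_some, sdiff_eq_left.2, deg_eq_card_halfEdge]
  · simp [hx.symm]
  · refine disjoint_left.2 fun h hx' hh => hx ?_
    rw [← hT h hh, (mem_filter_univ h).1 hx']

lemma deg_expand_self (hT : ∀ h ∈ T, endpoint h = v) :
    (G.expand v T).deg (some v) + #T = G.deg v + 1 := by
  refine (congrArg (· + #T) (deg_expand _)).trans ?_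
  have hsub : T ⊆ univ.filter fun h => endpoint h = v := fun h hh => (mem_filter_univ h).2 (hT h hh)
  rw [filter_expandEnd_eq_some, deg_eq_card_halfEdge, ← card_sdiff_add_card_eq_card hsub]
  simp
  omega

section Connectivity

variable {S : Finset G.E} {S' : Finset (G.expand v T).E}

lemma reach_expandEnd (hT : ∀ h ∈ T, endpoint h = v) (hnone : none ∈ S') (h : G.HalfEdge) :
    (G.expand v T).Reach S' (expandEnd T h) (some (endpoint h)) := by
  by_cases hh : h ∈ T
  · rw [expandEnd, if_pos hh, hT h hh]
    exact reach_src_tgt hnone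
  · rw [expandEnd, if_neg hh]
    exact .refl _ _

lemma ConnOn.expand (hT : ∀ h ∈ T, endpoint h = v) (hnone : none ∈ S')
    (hS : ∀ e ∈ S, some e ∈ S') (h : G.ConnOn S) : (G.expand v T).ConnOn S' := by
  refine h.of_map (H := G.expand v T) some (fun e he => ?_) ?_
  · exact (reach_expandEnd hT hnone (e, false)).symm.trans
      ((reach_src_tgt (hS e he)).trans (reach_expandEnd hT hnone (e, true)))
  · rintro (_ | x)
    · exact ⟨v, (reach_src_tgt hnone).symm⟩
    · exact ⟨x, .refl _ _⟩

lemma Bridgeless.expand (hG : G.Bridgeless) (hT : ∀ h ∈ T, endpoint h = v)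
    (hnone : ¬ (G.expand v T).IsBridge none) : (G.expand v T).Bridgeless := by
  rintro (_ | e)
  · exact hnone
  · refine not_not.2 (ConnOn.expand hT (mem_univ_sdiff_singleton.2 ?_) (fun f hf => ?_)
      (bridgeless_iff.1 hG e))
    · rintro ⟨⟩
    · exact mem_univ_sdiff_singleton.2 fun h =>
        mem_univ_sdiff_singleton.1 hf (Option.some_injective _ h)

end Connectivity

lemma exists_cut_of_isBridge_expand (hc : G.Connected) (hT : ∀ h ∈ T, endpoint h = v)
    (h : (G.expand v T).IsBridge none) : ∃ A : Set (Option G.V), none ∈ A ∧ some v ∉ A ∧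
      ∀ h, expandEnd T h ∈ A ↔ expandEnd T (h.1, !h.2) ∈ A := by
  have hc' : (G.expand v T).Connected :=
    ConnOn.expand hT (mem_univ _) (fun _ _ => mem_univ _) hc
  obtain ⟨A, hA, hsrc, htgt⟩ := hc'.exists_cut_of_isBridge h
  have hsome : ∀ e, expandEnd T (e, false) ∈ A ↔ expandEnd T (e, true) ∈ A := fun e =>
    hA (some e) (by rintro ⟨⟩)
  refine ⟨A, hsrc, htgt, ?_⟩
  rintro ⟨e, _ | _⟩
  · exact hsome e
  · exact (hsome e).symm

/-- Cuts witnessing that both new edges are bridges would intersect in a cut crossed by the edge of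
`a` alone. -/
lemma Bridgeless.not_isBridge_expand_or (hG : G.Bridgeless) {a b c : G.HalfEdge} (hbc : b ≠ c)
    (ha : endpoint a = v) (hb : endpoint b = v) (hc : endpoint c = v) :
    ¬ (G.expand v {a, b}).IsBridge none ∨ ¬ (G.expand v {a, c}).IsBridge none := by
  by_contra! ⟨hab, hac⟩
  obtain ⟨A₁, hn₁, hv₁, hA₁⟩ :=
    exists_cut_of_isBridge_expand (hG.connected a.1) (by simp [ha, hb]) hab
  obtain ⟨A₂, hn₂, hv₂, hA₂⟩ :=
    exists_cut_of_isBridge_expand (hG.connected a.1) (by simp [ha, hc]) hac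
  let A : Set G.V := {x | some x ∈ A₁ ∧ some x ∈ A₂}
  have hA : ∀ h ≠ a, endpoint h ∈ A ↔ expandEnd {a, b} h ∈ A₁ ∧ expandEnd {a, c} h ∈ A₂ := by
    intro h hh
    grind [expandEnd]
  have hopp : endpoint (a.1, !a.2) ∈ A := by
    refine (hA _ fun h => by simpa using congrArg Prod.snd h).2 ⟨(hA₁ a).1 ?_, (hA₂ a).1 ?_⟩
    · simpa [expandEnd] using hn₁
    · simpa [expandEnd] using hn₂
  refine hG a.1 (isBridge_of_cut (v := v) (fun f hf => ?_) hopp fun hv => hv₁ hv.1)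
  have hfa : ∀ s, (f, s) ≠ a := fun s hfs => hf (congrArg Prod.fst hfs)
  exact (hA _ (hfa false)).trans ((and_congr (hA₁ _) (hA₂ _)).trans (hA _ (hfa true)).symm)

end Expand

section ExpandSubdivide

variable {D : Multigraph} {v : D.V} {T : Finset D.HalfEdge} {w : D.E → ℕ}

/-- The chain lengths `w` on an expansion, with length zero for the new edge. -/
def expandWeight (v : D.V) (T : Finset D.HalfEdge) (w : D.E → ℕ) : (D.expand v T).E → ℕ :=
  fun e : Option D.E => e.elim 0 w

lemma mk_expandEnd (hT : ∀ h ∈ T, endpoint h = v) (h : D.HalfEdge) :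
    Quot.mk (zeroRel (D.expand v T) (expandWeight v T w)) (expandEnd T h) =
      Quot.mk _ (some (endpoint h)) := by
  by_cases hh : h ∈ T
  · rw [expandEnd, if_pos hh, hT h hh]
    exact Quot.sound ⟨none, rfl, rfl, rfl⟩
  · rw [expandEnd, if_neg hh]
    rfl

lemma getD_expandEnd (hT : ∀ h ∈ T, endpoint h = v) (h : D.HalfEdge) :
    (expandEnd T h).getD v = endpoint h := by
  by_cases hh : h ∈ T
  · rw [expandEnd, if_pos hh, hT h hh, Option.getD_none]
  · rw [expandEnd, if_neg hh, Option.getD_some]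

lemma exists_equiv_quot_expand (hT : ∀ h ∈ T, endpoint h = v) (w : D.E → ℕ) :
    ∃ q : Quot (zeroRel D w) ≃ Quot (zeroRel (D.expand v T) (expandWeight v T w)),
      ∀ x, q (Quot.mk _ x) = Quot.mk _ (some x) := by
  refine ⟨⟨Quot.lift (fun x => Quot.mk _ (some x)) ?_,
    Quot.lift (fun x : Option D.V => Quot.mk _ (x.getD v)) ?_, ?_, ?_⟩, fun _ => rfl⟩
  · rintro _ _ ⟨e, he, rfl, rfl⟩
    exact (mk_expandEnd hT (e, false)).symm.trans
      (.trans (Quot.sound ⟨some e, he, rfl, rfl⟩) (mk_expandEnd hT (e, true)))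
  · rintro _ _ ⟨_ | e, he, rfl, rfl⟩
    · rfl
    · refine .trans (congrArg _ (getD_expandEnd hT (e, false))) (.trans (Quot.sound
        ⟨e, he, rfl, rfl⟩) (congrArg _ (getD_expandEnd hT (e, true)).symm))
  · exact fun x => x.inductionOn fun _ => rfl
  · refine fun x => x.inductionOn ?_
    rintro (_ | x)
    · exact Eq.symm (Quot.sound ⟨none, rfl, rfl, rfl⟩)
    · rfl

lemma isIso_subdivide_expand (hT : ∀ h ∈ T, endpoint h = v) (w : D.E → ℕ) :
    IsIso (subdivide D w) (subdivide (D.expand v T) (expandWeight v T w)) := by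
  obtain ⟨q, hq⟩ := exists_equiv_quot_expand hT w
  let inner : (Σ f, Fin (w f - 1)) ≃ Σ f : Option D.E, Fin (expandWeight v T w f - 1) :=
    (Equiv.sigmaOptionEquivOfSome (fun f : Option D.E => Fin (expandWeight v T w f - 1))
      Fin.elim0).symm
  let edge : (Σ f, Fin (w f)) ≃ Σ f : Option D.E, Fin (expandWeight v T w f) :=
    (Equiv.sigmaOptionEquivOfSome (fun f : Option D.E => Fin (expandWeight v T w f))
      Fin.elim0).symm
  have hnode : ∀ f j, j ≤ w f → chainNode (D.expand v T) (expandWeight v T w) (some f) j =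
      q.sumCongr inner (chainNode D w f j) := by
    intro f j hj
    obtain rfl | hpos := Nat.eq_zero_or_pos j
    · rw [chainNode_zero f]
      exact (chainNode_zero (D := D.expand v T) (w := expandWeight v T w) (some f)).trans
        (congrArg Sum.inl ((mk_expandEnd hT (f, false)).trans (hq _).symm))
    obtain rfl | hlt := hj.eq_or_lt
    · rw [chainNode_length f]
      exact (chainNode_length (D := D.expand v T) (w := expandWeight v T w) (some f)).trans
        (congrArg Sum.inl ((mk_expandEnd hT (f, true)).trans (hq _).symm))
    obtain ⟨l, rfl⟩ := Nat.exists_eq_add_of_lt hpos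
    let x : Fin (w f - 1) := ⟨l, by omega⟩
    rw [zero_add, chainNode_succ f x]
    exact chainNode_succ (D := D.expand v T) (w := expandWeight v T w) (some f) x
  refine ⟨⟨q.sumCongr inner, edge, ?_⟩⟩
  rintro ⟨f, j⟩
  exact .inl ⟨hnode f j j.isLt.le, hnode f (j + 1) j.isLt⟩

end ExpandSubdivide

end Multigraph

lemma ZeroAcyclic.expand {D : Multigraph} {v : D.V} {T : Finset D.HalfEdge} {w : D.E → ℕ}
    (hT : ∀ h ∈ T, Multigraph.endpoint h = v) (hw : ZeroAcyclic D w) :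
    ZeroAcyclic (D.expand v T) (Multigraph.expandWeight v T w) := by
  obtain ⟨q, -⟩ := Multigraph.exists_equiv_quot_expand hT w
  have hzero : #{e | Multigraph.expandWeight v T w e = 0} = 1 + #{e | w e = 0} :=
    (Multigraph.card_filter_option fun e : Option D.E => (e.elim 0 w : ℕ) = 0).trans (by
      simp only [Option.elim_none, if_true, Option.elim_some]
      congr!)
  have hV : Fintype.card (D.expand v T).V = Fintype.card D.V + 1 := Fintype.card_option
  rw [ZeroAcyclic, ← Fintype.card_congr q, hzero, hV, ← hw]
  omega

lemma IsWeakDistillation.expand {D G : Multigraph} {v : D.V} {T : Finset D.HalfEdge}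
    (hT : ∀ h ∈ T, Multigraph.endpoint h = v) (h : IsWeakDistillation D G) :
    IsWeakDistillation (D.expand v T) G := by
  obtain ⟨w, hw, hG⟩ := h
  exact ⟨_, hw.expand hT, hG.trans (Multigraph.isIso_subdivide_expand hT w)⟩

/-- A property of multigraphs that, for any half-edges `a`, `b`, `c` at a vertex, survives the
expansion that moves `a`, `b` or the one that moves `a`, `c`; this suffices to split vertices of
large degree while maintaining it. -/
def SplitStable (P : Multigraph → Prop) : Prop :=
  ∀ ⦃D : Multigraph⦄ ⦃v : D.V⦄ ⦃a b c : D.HalfEdge⦄, a ≠ b → a ≠ c → b ≠ c →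
    Multigraph.endpoint a = v → Multigraph.endpoint b = v → Multigraph.endpoint c = v →
    P D → P (D.expand v {a, b}) ∨ P (D.expand v {a, c})

lemma splitStable_true : SplitStable fun _ => True :=
  fun _ _ _ _ _ _ _ _ _ _ _ h => .inl h

lemma splitStable_bridgeless : SplitStable Multigraph.Bridgeless :=
  fun _ _ _ _ _ _ _ hbc ha hb hc hD => (hD.not_isBridge_expand_or hbc ha hb hc).imp
    (hD.expand (by simp [ha, hb])) (hD.expand (by simp [ha, hc]))

namespace Multigraph

/-- The total excess of the degrees over three, which measures how far a multigraph of minimum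
degree at least three is from being cubic. -/
def excess (D : Multigraph) : ℕ := ∑ v, (D.deg v - 3)

section Pair

variable {D : Multigraph} {v : D.V} {T : Finset D.HalfEdge}

lemma three_le_deg_expand (hT : ∀ h ∈ T, endpoint h = v) (hcard : #T = 2) (hv : 4 ≤ D.deg v)
    (hD : ∀ x, 3 ≤ D.deg x) : ∀ x, 3 ≤ (D.expand v T).deg x := by
  have hself := deg_expand_self hT
  rintro (_ | x)
  · exact (deg_expand_none (v := v)).trans (by rw [hcard]) |>.ge
  · obtain rfl | hx := eq_or_ne x v
    · omega
    · exact (hD x).trans_eq (deg_expand_of_ne hT hx).symm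

lemma excess_expand_lt (hT : ∀ h ∈ T, endpoint h = v) (hcard : #T = 2) (hv : 4 ≤ D.deg v) :
    (D.expand v T).excess < D.excess := by
  have hnone : (D.expand v T).deg none - 3 = 0 := by
    rw [deg_expand_none, hcard]
  have hself : (D.expand v T).deg (some v) - 3 < D.deg v - 3 := by
    have := deg_expand_self hT
    omega
  calc (D.expand v T).excess
      = ((D.expand v T).deg none - 3) + ∑ x, ((D.expand v T).deg (some x) - 3) :=
        Fintype.sum_option fun x : Option D.V => (D.expand v T).deg x - 3
    _ = ∑ x, ((D.expand v T).deg (some x) - 3) := by rw [hnone, zero_add]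
    _ < D.excess := by
      refine sum_lt_sum (fun x _ => ?_) ⟨v, mem_univ v, hself⟩
      obtain rfl | hx := eq_or_ne x v
      · exact hself.le
      · rw [deg_expand_of_ne hT hx]

end Pair

lemma exists_halfEdges_of_three_le_deg {D : Multigraph} {v : D.V} (hv : 3 ≤ D.deg v) :
    ∃ a b c : D.HalfEdge, a ≠ b ∧ a ≠ c ∧ b ≠ c ∧
      endpoint a = v ∧ endpoint b = v ∧ endpoint c = v := by
  rw [deg_eq_card_halfEdge] at hv
  obtain ⟨a, b, c, ha, hb, hc, hab, hac, hbc⟩ := two_lt_card_iff.1 hv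
  simp only [mem_filter_univ] at ha hb hc
  exact ⟨a, b, c, hab, hac, hbc, ha, hb, hc⟩

end Multigraph

lemma SplitStable.exists_expand {P : Multigraph → Prop} (hP : SplitStable P) {D : Multigraph}
    (hD : P D) {v : D.V} (hv : 3 ≤ D.deg v) : ∃ T : Finset D.HalfEdge,
      #T = 2 ∧ (∀ h ∈ T, Multigraph.endpoint h = v) ∧ P (D.expand v T) := by
  obtain ⟨a, b, c, hab, hac, hbc, ha, hb, hc⟩ := Multigraph.exists_halfEdges_of_three_le_deg hv
  obtain h | h := hP hab hac hbc ha hb hc hD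
  · exact ⟨{a, b}, card_pair hab, by simp [ha, hb], h⟩
  · exact ⟨{a, c}, card_pair hac, by simp [ha, hc], h⟩

lemma SplitStable.exists_cubic {P : Multigraph → Prop} (hP : SplitStable P) {D G : Multigraph}
    (hPD : P D) (hdeg : ∀ v, 3 ≤ D.deg v) (hDG : IsWeakDistillation D G) :
    ∃ D', (∀ v : D'.V, D'.deg v = 3) ∧ P D' ∧ IsWeakDistillation D' G := by
  induction hn : D.excess using Nat.strong_induction_on generalizing D with
  | _ n ih =>
    by_cases hcubic : ∀ v, D.deg v = 3
    · exact ⟨D, hcubic, hPD, hDG⟩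
    · obtain ⟨v, hv⟩ := not_forall.1 hcubic
      have hv : 4 ≤ D.deg v := (hdeg v).lt_of_ne' hv
      obtain ⟨T, hcard, hT, hPT⟩ := hP.exists_expand hPD (hdeg v)
      exact ih _ (hn ▸ Multigraph.excess_expand_lt hT hcard hv) hPT
        (Multigraph.three_le_deg_expand hT hcard hv hdeg) (hDG.expand hT) rfl

lemma IsWeakDistillation.two_le_deg {D G : Multigraph} (h : IsWeakDistillation D G)
    (hD : ∀ v, 2 ≤ D.deg v) (v : G.V) : 2 ≤ G.deg v := by
  obtain ⟨w, hw, ⟨i⟩⟩ := h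
  exact (Multigraph.two_le_deg_subdivide hw hD _).trans_eq (i.deg_eq v)

lemma IsWeakDistillation.bridgeless {D G : Multigraph} (h : IsWeakDistillation D G)
    (hD : D.Bridgeless) : G.Bridgeless := by
  obtain ⟨w, -, hG⟩ := h
  exact hG.symm.bridgeless (Multigraph.bridgeless_subdivide hD w)

/-- (a) G has a cubic weak distillation iff G has no vertex of degree 1;
(b) G has a bridgeless cubic weak distillation iff G is bridgeless. -/
theorem cubic_weak_distillation_iff (n k : ℕ) (hn : 1 ≤ n) (hk : 1 ≤ k)
    (G : Multigraph) (hG : memG G n (n + k)) :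
    ((∃ D : Multigraph, (∀ v : D.V, D.deg v = 3) ∧ IsWeakDistillation D G) ↔
      (∀ v : G.V, G.deg v ≠ 1)) ∧
    ((∃ D : Multigraph, (∀ v : D.V, D.deg v = 3) ∧ D.Bridgeless ∧
        IsWeakDistillation D G) ↔ G.Bridgeless) := by
  obtain ⟨hV, hE, hconn⟩ := hG
  have hlt : G.nV < G.nE := by omega
  refine ⟨⟨?_, fun hdeg => ?_⟩, ⟨?_, fun hbridgeless => ?_⟩⟩
  · rintro ⟨D, hcubic, hDG⟩ v hv
    have := hDG.two_le_deg (fun x => (hcubic x).symm ▸ Nat.le_succ 2) v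
    omega
  · obtain ⟨H, hGH, hH⟩ := Multigraph.exists_isSubdivision_three_le_deg hconn hlt hdeg
    obtain ⟨D, hcubic, -, hDG⟩ := splitStable_true.exists_cubic trivial hH
      (hGH.isWeakDistillation (.refl H))
    exact ⟨D, hcubic, hDG⟩
  · rintro ⟨D, -, hD, hDG⟩
    exact hDG.bridgeless hD
  · obtain ⟨H, hGH, hH⟩ := Multigraph.exists_isSubdivision_three_le_deg hconn hlt
      hbridgeless.deg_ne_one
    exact splitStable_bridgeless.exists_cubic (hGH.bridgeless hbridgeless) hH
      (hGH.isWeakDistillation (.refl H))
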